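/- arXiv:1611.04581 — 4 statements merged into one kernel-verified Lean document; each statement's English description precedes it below -/
import Mathlib

section
/- Let p ≥ 1 and let j₁, …, j_p be i.i.d. indices drawn uniformly from {1, …, p}. Define the random p × p matrix M = (1/2) Σᵢ eᵢ (eᵢ + e_{jᵢ})ᵀ, where eᵢ denotes the i-th standard basis vector of ℝᵖ (so M row i has entry 1/2 on the diagonal and entry 1/2 in column jᵢ, with both halves adding if jᵢ = i). Then E[Mᵀ M] = (1/2)(I + (1/p) 𝟙 𝟙ᵀ), where 𝟙 ∈ ℝᵖ is the all-ones vector and I is the p × p identity matrix. -/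
open Matrix BigOperators

/-! Write `M = ½ (1 + S)`, where row `i` of `S` is `e_{j i}ᵀ`. Then
`Mᵀ M = ¼ (1 + S + Sᵀ + Sᵀ S)`, and `Sᵀ S = ∑ i, e_{j i} e_{j i}ᵀ` because `eᵢᵀ eₖ = 0` for `i ≠ k`.
So both `S` and `Sᵀ S` are sums of terms that depend on a single coordinate of `j`, and each term
may be averaged over one uniform index: `E[S] = (1 / p) 𝟙 𝟙ᵀ` and `E[Sᵀ S] = 1`. -/

section

variable {m n R : Type*} [DecidableEq m] [Fintype m]

lemma expect_comp_eval {E : Type*} [AddCommMonoid E] [Module ℚ≥0 E] [Fintype n] (f : n → E)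
    (i : m) : 𝔼 j : m → n, f (j i) = 𝔼 k, f k := by
  obtain _ | _ := isEmpty_or_nonempty n
  · have : IsEmpty (m → n) := ⟨fun j => isEmptyElim (j i)⟩
    simp only [Finset.univ_eq_empty, Finset.expect_empty]
  have hn : (Fintype.card n : ℚ≥0) ≠ 0 := Nat.cast_ne_zero.2 Fintype.card_ne_zero
  have hm : Fintype.card m ≠ 0 := (Fintype.card_pos_iff.2 ⟨i⟩).ne'
  have sum_eval : ∑ j : m → n, f (j i) =
      (Fintype.card n : ℚ≥0) ^ (Fintype.card m - 1) • ∑ k, f k := by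
    rw [← Nat.cast_pow, Nat.cast_smul_eq_nsmul, ← Finset.card_univ (α := n),
      ← Fintype.sum_piFinset_apply, Fintype.piFinset_univ]
  rw [Finset.expect_univ, Finset.expect_univ, sum_eval, smul_smul, Fintype.card_fun,
    Nat.cast_pow, ← mul_pow_sub_one hm, _root_.mul_inv_rev, mul_comm,
    mul_inv_cancel_left₀ (pow_ne_zero _ hn)]

variable [DecidableEq n]

/-- The `0`-`1` matrix `∑ i, eᵢ e_{j i}ᵀ` of a choice function `j`; acting on a column vector `x`,
it replaces the `i`-th coordinate by `x (j i)`. -/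
def selectionMatrix (R : Type*) [Semiring R] (j : m → n) : Matrix m n R :=
  ∑ i, single i (j i) 1

lemma transpose_selectionMatrix_mul_self [Semiring R] (j : m → n) :
    (selectionMatrix R j)ᵀ * selectionMatrix R j = ∑ i, single (j i) (j i) 1 := by
  have single_mul (i k : m) : single (j i) i (1 : R) * single k (j k) (1 : R) =
      if i = k then single (j i) (j i) 1 else 0 := by
    split_ifs with hik
    · rw [← hik, single_mul_single_same, mul_one]
    · exact single_mul_single_of_ne _ _ _ _ hik _
  simp only [selectionMatrix, transpose_sum, transpose_single, Matrix.sum_mul, Matrix.mul_sum,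
    single_mul, Finset.sum_ite_eq', Finset.mem_univ, if_true]

section Expect

variable [Semiring R] [Module ℚ≥0 R] [Fintype n]

lemma expect_selectionMatrix :
    𝔼 j : m → n, selectionMatrix R j = (Fintype.card n : ℚ≥0)⁻¹ • vecMulVec 1 1 := by
  calc 𝔼 j : m → n, selectionMatrix R j
    _ = ∑ i : m, 𝔼 j : m → n, single i (j i) (1 : R) := Finset.expect_sum_comm _ _ _
    _ = ∑ i : m, 𝔼 k : n, single i k (1 : R) :=
      Finset.sum_congr rfl fun i _ => expect_comp_eval (fun k => single i k (1 : R)) i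
    _ = (Fintype.card n : ℚ≥0)⁻¹ • ∑ i : m, ∑ k : n, single i k (1 : R) := by
      simp only [Finset.expect_univ, Finset.smul_sum]
    _ = (Fintype.card n : ℚ≥0)⁻¹ • vecMulVec 1 1 := by
      rw [sum_sum_single fun _ _ => (1 : R), vecMulVec_one]
      rfl

lemma expect_transpose_selectionMatrix_mul_self :
    𝔼 j : m → n, (selectionMatrix R j)ᵀ * selectionMatrix R j =
      (Fintype.card m / Fintype.card n : ℚ≥0) • (1 : Matrix n n R) := by
  calc 𝔼 j : m → n, (selectionMatrix R j)ᵀ * selectionMatrix R j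
    _ = ∑ i : m, 𝔼 j : m → n, single (j i) (j i) (1 : R) := by
      simp only [transpose_selectionMatrix_mul_self, Finset.expect_sum_comm]
    _ = ∑ _i : m, 𝔼 k : n, single k k (1 : R) :=
      Finset.sum_congr rfl fun i _ => expect_comp_eval (fun k => single k k (1 : R)) i
    _ = (Fintype.card m / Fintype.card n : ℚ≥0) • (1 : Matrix n n R) := by
      rw [Finset.sum_const, Finset.card_univ, Finset.expect_univ, sum_single_one,
        ← Nat.cast_smul_eq_nsmul ℚ≥0, smul_smul, div_eq_mul_inv]

end Expect

/-- The averaging matrix of one round of pull-gossip: node `i` replaces its value by the mean of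
its own and that of node `j i`. -/
def pullGossipMatrix (R : Type*) [DivisionSemiring R] (j : m → m) : Matrix m m R :=
  (1 / 2 : R) • ∑ i, vecMulVec (Pi.single i 1) (Pi.single i 1 + Pi.single (j i) 1)

lemma pullGossipMatrix_eq_smul_one_add_selectionMatrix [DivisionSemiring R] (j : m → m) :
    pullGossipMatrix R j = (1 / 2 : R) • (1 + selectionMatrix R j) := by
  simp only [pullGossipMatrix, selectionMatrix, vecMulVec_add,
    ← single_eq_single_vecMulVec_single, Finset.sum_add_distrib, sum_single_one]

lemma transpose_pullGossipMatrix_mul_self [Semifield R] (j : m → m) :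
    (pullGossipMatrix R j)ᵀ * pullGossipMatrix R j =
      (1 / 4 : R) • (1 + selectionMatrix R j + (selectionMatrix R j)ᵀ +
        (selectionMatrix R j)ᵀ * selectionMatrix R j) := by
  have quarter : (1 / 2 * (1 / 2) : R) = 1 / 4 := by
    rw [one_div_mul_one_div]
    norm_num
  rw [pullGossipMatrix_eq_smul_one_add_selectionMatrix, transpose_smul, transpose_add,
    transpose_one, smul_mul_smul_comm, quarter, add_mul, one_mul, mul_add, mul_one,
    add_assoc _ _ (_ * _)]

theorem stmt_0_general [Semifield R] [CharZero R] :
    𝔼 j : m → m, (pullGossipMatrix R j)ᵀ * pullGossipMatrix R j =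
      (1 / 2 : R) • (1 + (Fintype.card m : R)⁻¹ • vecMulVec 1 1) := by
  obtain _ | _ := isEmpty_or_nonempty m
  · exact Subsingleton.elim _ _
  have hm : (Fintype.card m : ℚ≥0) ≠ 0 := Nat.cast_ne_zero.2 Fintype.card_ne_zero
  have expect_S : 𝔼 j : m → m, selectionMatrix R j =
      (Fintype.card m : R)⁻¹ • vecMulVec 1 1 := by
    rw [expect_selectionMatrix, ← NNRat.cast_smul_eq_nnqsmul R, NNRat.cast_inv, NNRat.cast_natCast]
  have expect_transpose_S : 𝔼 j : m → m, (selectionMatrix R j)ᵀ =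
      (Fintype.card m : R)⁻¹ • vecMulVec 1 1 := by
    rw [← transpose_vecMulVec, ← transpose_smul, ← expect_S]
    exact (map_expect (transposeLinearEquiv m m ℚ≥0 R) _ _).symm
  have expect_gram_S : 𝔼 j : m → m, (selectionMatrix R j)ᵀ * selectionMatrix R j = 1 := by
    rw [expect_transpose_selectionMatrix_mul_self, div_self hm, one_smul]
  simp only [transpose_pullGossipMatrix_mul_self, ← Finset.smul_expect, Finset.expect_add_distrib,
    Fintype.expect_const, expect_S, expect_transpose_S, expect_gram_S]
  module

end

/-- Second-moment computation for the synchronous pull-gossip averaging matrix: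
with `j₁, …, j_p` i.i.d. uniform on `{1, …, p}` (modeled by averaging over all
`p^p` equally likely index assignments `j : Fin p → Fin p`), and
`M j = (1/2) ∑ i, eᵢ (eᵢ + e_{j i})ᵀ`, one has
`E[Mᵀ M] = (1/2)(I + (1/p) 𝟙 𝟙ᵀ)`. -/
theorem stmt_0 (p : ℕ) (hp : 1 ≤ p)
    (M : (Fin p → Fin p) → Matrix (Fin p) (Fin p) ℝ)
    (hM : ∀ j : Fin p → Fin p,
      M j = (1 / 2 : ℝ) •
        ∑ i : Fin p, vecMulVec (Pi.single i 1) (Pi.single i 1 + Pi.single (j i) 1)) :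
    ((p : ℝ) ^ p)⁻¹ • ∑ j : Fin p → Fin p, (M j)ᵀ * M j =
      (1 / 2 : ℝ) •
        ((1 : Matrix (Fin p) (Fin p) ℝ) +
          (p : ℝ)⁻¹ • vecMulVec (fun _ => (1 : ℝ)) (fun _ => (1 : ℝ))) := by
  obtain rfl : M = pullGossipMatrix ℝ := funext hM
  simpa only [Finset.expect_univ, ← NNRat.cast_smul_eq_nnqsmul ℝ, NNRat.cast_inv, NNRat.cast_pow,
    NNRat.cast_natCast, Fintype.card_fun, Fintype.card_fin, Nat.cast_pow, Pi.one_def] using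
    stmt_0_general (m := Fin p) (R := ℝ)
end

section
/- Let f : ℝ → ℝ be m-strongly convex with L-Lipschitz derivative (0 < m ≤ L) and unique minimizer θ⋆. Fix θ ∈ ℝᵖ, a step size α with 0 < α ≤ 2/(m+L), and σ ≥ 0. Let j₁, …, j_p be i.i.d. uniform indices on {1, …, p} and let ξ₁, …, ξ_p be random variables with mean 0 and variance at most σ², independent of the indices. Define the one-step synchronous pull-gossip update θ′ᵢ = (1/2)(θᵢ + θ_{jᵢ}) − α ( f′((1/2)(θᵢ + θ_{jᵢ})) + ξᵢ ) for each i. Then E[ Σᵢ (θ′ᵢ − θ⋆)² ] ≤ (1 − 2α·mL/(m+L)) Σᵢ (θᵢ − θ⋆)² + α² p σ². -/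
open MeasureTheory BigOperators

/-!
Let `z` be the zero of `F` (the minimizer `θ⋆`, when `F = f'`). The centred noise only adds its
variance: `E ‖y - α (F y + ξ) - z‖² = ‖y - α F y - z‖² + α² E ‖ξ‖²`. Since `α ≤ 2 / (m + L)`, the
coercivity inequality absorbs the term `α² ‖F y‖²` of the expanded square, so the noiseless step
scales squared distances to `z` by at most `1 - 2α mL / (m + L) ≥ 0`. Gossip costs nothing: by
convexity of the squared norm, `‖(θᵢ + θ_{jᵢ}) / 2 - z‖²` is at most the mean of `‖θᵢ - z‖²` and
`‖θ_{jᵢ} - z‖²`, and since `jᵢ` is uniform, both have the same average after summing over `i`.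
-/

open scoped RealInnerProductSpace

section Coercivity

variable {E : Type*} [NormedAddCommGroup E] [InnerProductSpace ℝ E] {m L α : ℝ} {F : E → E}

/-- The coercivity inequality
`⟪F x - F z, x - z⟫ ≥ mL/(m+L) ‖x - z‖² + 1/(m+L) ‖F x - F z‖²` satisfied by the gradient `F` of an
`m`-strongly convex function with `L`-Lipschitz gradient, with the denominators cleared. For `m = 0`
it says that `F` is `1/L`-cocoercive. -/
def IsStronglyCocoercive (m L : ℝ) (F : E → E) : Prop :=
  ∀ x z, m * L * ‖x - z‖ ^ 2 + ‖F x - F z‖ ^ 2 ≤ (m + L) * ⟪F x - F z, x - z⟫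

-- On the line, the slope `s = (f x - f z) / (x - z)` lies in `[m, L]`, so `(s - m) * (L - s) ≥ 0`.
lemma isStronglyCocoercive_of_stronglyMonotone_of_lipschitz {f : ℝ → ℝ}
    (hmono : ∀ x z, m * (x - z) ^ 2 ≤ (f x - f z) * (x - z))
    (hlip : ∀ x z, |f x - f z| ≤ L * |x - z|) : IsStronglyCocoercive m L f := by
  intro x z
  rcases eq_or_ne x z with rfl | hne
  · simp
  have hd : 0 < (x - z) ^ 2 := sq_pos_of_ne_zero (sub_ne_zero.2 hne)
  have hs : f x - f z = slope f z x * (x - z) := by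
    rw [slope_def_field, div_mul_cancel₀ _ (sub_ne_zero.2 hne)]
  have hm : m ≤ slope f z x := by
    refine le_of_mul_le_mul_right ?_ hd
    linear_combination hmono x z + (x - z) * hs
  have hL : slope f z x ≤ L := by
    refine (le_abs_self _).trans (le_of_mul_le_mul_right ?_ (abs_pos.2 (sub_ne_zero.2 hne)))
    rw [← abs_mul, ← hs]
    exact hlip x z
  have hprod := mul_nonneg hd.le (mul_nonneg (sub_nonneg.2 hm) (sub_nonneg.2 hL))
  simp only [Real.norm_eq_abs, sq_abs, RCLike.inner_apply, conj_trivial, hs]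
  linear_combination hprod

lemma contractionFactor_nonneg (hmL : 0 < m + L) (hα : 0 ≤ α) (hα2 : α ≤ 2 / (m + L)) :
    0 ≤ 1 - 2 * α * (m * L / (m + L)) := by
  have hle : m * L / (m + L) ≤ (m + L) / 4 := by
    rw [div_le_iff₀ hmL]
    linear_combination sq_nonneg (m - L) / 4
  have hα' : α * (m + L) ≤ 2 := (le_div_iff₀ hmL).1 hα2
  linear_combination 2 * α * hle + hα' / 2

lemma IsStronglyCocoercive.norm_gradientStep_sub_sq_le (hF : IsStronglyCocoercive m L F)
    (hmL : 0 < m + L) (hα : 0 ≤ α) (hα2 : α ≤ 2 / (m + L)) (x z : E) :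
    ‖(x - α • F x) - (z - α • F z)‖ ^ 2 ≤
      (1 - 2 * α * (m * L / (m + L))) * ‖x - z‖ ^ 2 := by
  have hcoer : m * L / (m + L) * ‖x - z‖ ^ 2 + ‖F x - F z‖ ^ 2 / (m + L) ≤
      ⟪F x - F z, x - z⟫ := by
    rw [div_mul_eq_mul_div, ← add_div, div_le_iff₀' hmL]
    exact hF x z
  have habsorb : α * ‖F x - F z‖ ^ 2 ≤ 2 / (m + L) * ‖F x - F z‖ ^ 2 := by gcongr
  calc ‖(x - α • F x) - (z - α • F z)‖ ^ 2
      = ‖(x - z) - α • (F x - F z)‖ ^ 2 := by rw [smul_sub, sub_sub_sub_comm]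
    _ = ‖x - z‖ ^ 2 - 2 * α * ⟪F x - F z, x - z⟫ + α * (α * ‖F x - F z‖ ^ 2) := by
        rw [norm_sub_sq_real, real_inner_smul_right, real_inner_comm, norm_smul, mul_pow,
          Real.norm_eq_abs, sq_abs]
        ring
    _ ≤ (1 - 2 * α * (m * L / (m + L))) * ‖x - z‖ ^ 2 := by
        linear_combination 2 * α * hcoer + α * habsorb

end Coercivity

section Noise

/-- One step of stochastic gradient descent from `x` with step size `α`, where `F` is the gradient
and `η` the noise in its evaluation. -/
def noisyGradientStep {E : Type*} [AddCommGroup E] [Module ℝ E]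
    (F : E → E) (α : ℝ) (η x : E) : E :=
  x - α • (F x + η)

variable {Ω : Type*} [MeasurableSpace Ω] {μ : Measure Ω}

lemma memLp_noisyGradientStep {E : Type*} [NormedAddCommGroup E] [NormedSpace ℝ E]
    [IsFiniteMeasure μ] {q : ENNReal} {ξ : Ω → E} (hξ : MemLp ξ q μ) (F : E → E) (α : ℝ) (x : E) :
    MemLp (fun ω ↦ noisyGradientStep F α (ξ ω) x) q μ :=
  (memLp_const x).sub (((memLp_const (F x)).add hξ).const_smul α)

variable {E : Type*} [NormedAddCommGroup E] [InnerProductSpace ℝ E] [CompleteSpace E]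
  [IsProbabilityMeasure μ] {ξ : Ω → E}

lemma integral_norm_sub_sq_of_integral_eq_zero (hξ : MemLp ξ 2 μ) (hmean : ∫ ω, ξ ω ∂μ = 0)
    (b : E) : ∫ ω, ‖b - ξ ω‖ ^ 2 ∂μ = ‖b‖ ^ 2 + ∫ ω, ‖ξ ω‖ ^ 2 ∂μ := by
  have hint : Integrable ξ μ := hξ.integrable one_le_two
  have hinner : Integrable (fun ω ↦ 2 * ⟪b, ξ ω⟫) μ := (hint.const_inner b).const_mul 2
  have hsq : Integrable (fun ω ↦ ‖ξ ω‖ ^ 2) μ := hξ.integrable_norm_pow two_ne_zero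
  simp_rw [norm_sub_sq_real]
  rw [integral_add (f := fun ω ↦ ‖b‖ ^ 2 - 2 * ⟪b, ξ ω⟫) ((integrable_const _).sub hinner) hsq,
    integral_sub (integrable_const _) hinner, integral_const_mul, integral_inner hint, hmean]
  simp

lemma IsStronglyCocoercive.integral_norm_noisyGradientStep_sub_sq_le
    {m L α σ : ℝ} {F : E → E} {z : E} (hF : IsStronglyCocoercive m L F) (hmL : 0 < m + L)
    (hα : 0 ≤ α) (hα2 : α ≤ 2 / (m + L)) (hz : F z = 0) (hξ : MemLp ξ 2 μ) (hmean : ∫ ω, ξ ω ∂μ = 0)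
    (hvar : ∫ ω, ‖ξ ω‖ ^ 2 ∂μ ≤ σ ^ 2) (x : E) :
    ∫ ω, ‖noisyGradientStep F α (ξ ω) x - z‖ ^ 2 ∂μ ≤
      (1 - 2 * α * (m * L / (m + L))) * ‖x - z‖ ^ 2 + α ^ 2 * σ ^ 2 := by
  have hmean_smul : ∫ ω, α • ξ ω ∂μ = 0 := by rw [integral_smul, hmean, smul_zero]
  calc ∫ ω, ‖noisyGradientStep F α (ξ ω) x - z‖ ^ 2 ∂μ
      = ∫ ω, ‖((x - α • F x) - (z - α • F z)) - (α • ξ) ω‖ ^ 2 ∂μ := by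
        refine integral_congr_ae (.of_forall fun ω ↦ ?_)
        simp only [noisyGradientStep, hz, Pi.smul_apply, smul_add, smul_zero, sub_zero, ← sub_sub]
        rw [sub_right_comm]
    _ = ‖(x - α • F x) - (z - α • F z)‖ ^ 2 + α ^ 2 * ∫ ω, ‖ξ ω‖ ^ 2 ∂μ := by
        rw [integral_norm_sub_sq_of_integral_eq_zero (hξ.const_smul α) hmean_smul]
        simp only [Pi.smul_apply, norm_smul, mul_pow, Real.norm_eq_abs, sq_abs, integral_const_mul]
    _ ≤ (1 - 2 * α * (m * L / (m + L))) * ‖x - z‖ ^ 2 + α ^ 2 * σ ^ 2 := by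
        gcongr
        exact hF.norm_gradientStep_sub_sq_le hmL hα hα2 x z

end Noise

section Gossip

lemma expect_pi_apply {ι κ M : Type*} [Fintype ι] [DecidableEq ι] [Fintype κ]
    [AddCommMonoid M] [Module ℚ≥0 M] (h : κ → M) (i : ι) :
    𝔼 j : ι → κ, h (j i) = 𝔼 k, h k := by
  cases isEmpty_or_nonempty κ
  · have : IsEmpty (ι → κ) := ⟨fun j ↦ isEmptyElim (j i)⟩
    simp
  calc 𝔼 j : ι → κ, h (j i)
      = 𝔼 q : κ × ({i' // i' ≠ i} → κ), h q.1 :=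
        Fintype.expect_equiv (Equiv.funSplitAt i κ) _ _ fun _ ↦ rfl
    _ = 𝔼 k, 𝔼 _ : {i' // i' ≠ i} → κ, h k := Finset.expect_product' .univ .univ fun k _ ↦ h k
    _ = 𝔼 k, h k := by simp only [Fintype.expect_const]

variable {ι : Type*} [Fintype ι] [DecidableEq ι]

lemma expect_sum_apply_self {M : Type*} [AddCommMonoid M] [Module ℚ≥0 M] (a : ι → M) :
    𝔼 j : ι → ι, ∑ i, a (j i) = ∑ i, a i := by
  rw [Finset.expect_sum_comm]
  simp only [expect_pi_apply a, Finset.sum_const, Finset.card_univ, Fintype.card_smul_expect]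

variable {E : Type*} [NormedAddCommGroup E] [NormedSpace ℝ E]

lemma norm_midpoint_sub_sq_le (x y z : E) :
    ‖midpoint ℝ x y - z‖ ^ 2 ≤ (‖x - z‖ ^ 2 + ‖y - z‖ ^ 2) / 2 := by
  have hmid : ‖midpoint ℝ x y - z‖ ≤ (‖x - z‖ + ‖y - z‖) / 2 := by
    simpa [dist_eq_norm] using dist_midpoint_midpoint_le x y z z
  calc ‖midpoint ℝ x y - z‖ ^ 2
      ≤ ((‖x - z‖ + ‖y - z‖) / 2) ^ 2 := by gcongr
    _ ≤ (‖x - z‖ ^ 2 + ‖y - z‖ ^ 2) / 2 := by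
        linear_combination sq_nonneg (‖x - z‖ - ‖y - z‖) / 4

lemma expect_sum_norm_midpoint_sub_sq_le (θ : ι → E) (z : E) :
    𝔼 j : ι → ι, ∑ i, ‖midpoint ℝ (θ i) (θ (j i)) - z‖ ^ 2 ≤ ∑ i, ‖θ i - z‖ ^ 2 := by
  have : Nonempty (ι → ι) := ⟨id⟩
  calc 𝔼 j : ι → ι, ∑ i, ‖midpoint ℝ (θ i) (θ (j i)) - z‖ ^ 2
      ≤ 𝔼 j : ι → ι, ∑ i, (‖θ i - z‖ ^ 2 + ‖θ (j i) - z‖ ^ 2) / 2 := by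
        gcongr
        exact norm_midpoint_sub_sq_le _ _ _
    _ = (∑ i, ‖θ i - z‖ ^ 2 + 𝔼 j : ι → ι, ∑ i, ‖θ (j i) - z‖ ^ 2) / 2 := by
        simp only [← Finset.sum_div, Finset.sum_add_distrib, ← Finset.expect_div,
          Finset.expect_add_distrib, Fintype.expect_const]
    _ = ∑ i, ‖θ i - z‖ ^ 2 := by
        rw [expect_sum_apply_self fun k ↦ ‖θ k - z‖ ^ 2, add_self_div_two]

end Gossip

theorem stmt_2_general {ι E Ω : Type*} [Fintype ι] [DecidableEq ι]
    [NormedAddCommGroup E] [InnerProductSpace ℝ E] [CompleteSpace E]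
    [MeasurableSpace Ω] {μ : Measure Ω} [IsProbabilityMeasure μ]
    {m L α σ : ℝ} (hmL : 0 < m + L) (hα : 0 ≤ α) (hα2 : α ≤ 2 / (m + L))
    {F : E → E} (hF : IsStronglyCocoercive m L F) {z : E} (hz : F z = 0) (θ : ι → E)
    {ξ : ι → Ω → E} (hξ : ∀ i, MemLp (ξ i) 2 μ) (hmean : ∀ i, ∫ ω, ξ i ω ∂μ = 0)
    (hvar : ∀ i, ∫ ω, ‖ξ i ω‖ ^ 2 ∂μ ≤ σ ^ 2) :
    𝔼 j : ι → ι, ∫ ω, ∑ i,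
        ‖noisyGradientStep F α (ξ i ω) (midpoint ℝ (θ i) (θ (j i))) - z‖ ^ 2 ∂μ ≤
      (1 - 2 * α * (m * L / (m + L))) * ∑ i, ‖θ i - z‖ ^ 2 +
        α ^ 2 * Fintype.card ι * σ ^ 2 := by
  set c := 1 - 2 * α * (m * L / (m + L))
  have hc : 0 ≤ c := contractionFactor_nonneg hmL hα hα2
  have : Nonempty (ι → ι) := ⟨id⟩
  calc 𝔼 j : ι → ι, ∫ ω, ∑ i,
        ‖noisyGradientStep F α (ξ i ω) (midpoint ℝ (θ i) (θ (j i))) - z‖ ^ 2 ∂μ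
      ≤ 𝔼 j : ι → ι, ∑ i, (c * ‖midpoint ℝ (θ i) (θ (j i)) - z‖ ^ 2 + α ^ 2 * σ ^ 2) := by
        gcongr with j
        have hint i : Integrable (fun ω ↦
            ‖noisyGradientStep F α (ξ i ω) (midpoint ℝ (θ i) (θ (j i))) - z‖ ^ 2) μ :=
          ((memLp_noisyGradientStep (hξ i) F α _).sub (memLp_const z)).integrable_norm_pow
            two_ne_zero
        rw [integral_finsetSum _ fun i _ ↦ hint i]
        gcongr with i
        exact hF.integral_norm_noisyGradientStep_sub_sq_le hmL hα hα2 hz (hξ i) (hmean i) (hvar i) _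
    _ = c * 𝔼 j : ι → ι, ∑ i, ‖midpoint ℝ (θ i) (θ (j i)) - z‖ ^ 2 +
          α ^ 2 * Fintype.card ι * σ ^ 2 := by
        simp only [Finset.sum_add_distrib, ← Finset.mul_sum, Finset.expect_add_distrib,
          ← Finset.mul_expect, Fintype.expect_const, Finset.sum_const, Finset.card_univ,
          nsmul_eq_mul]
        ring
    _ ≤ c * ∑ i, ‖θ i - z‖ ^ 2 + α ^ 2 * Fintype.card ι * σ ^ 2 := by
        gcongr
        exact expect_sum_norm_midpoint_sub_sq_le θ z

/-- One-step descent lemma for synchronous pull-gossip SGD: `f` is `m`-strongly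
convex with `L`-Lipschitz derivative `f'` and minimizer `θ⋆`; each node `i`
averages with a uniformly random node `j i` (i.i.d. uniform indices, modeled by
averaging over all `p^p` index assignments, independent of the noise by the
product structure) and takes a noisy gradient step with zero-mean noise of
variance at most `σ²`.  Then
`E[∑ᵢ (θ'ᵢ − θ⋆)²] ≤ (1 − 2α mL/(m+L)) ∑ᵢ (θᵢ − θ⋆)² + α² p σ²`. -/
theorem stmt_2 (p : ℕ) (hp : 1 ≤ p)
    (m L α σ : ℝ) (hm : 0 < m) (hmL : m ≤ L)
    (hα : 0 < α) (hα2 : α ≤ 2 / (m + L)) (hσ : 0 ≤ σ)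
    (f f' : ℝ → ℝ) (θstar : ℝ)
    (hderiv : ∀ x, HasDerivAt f (f' x) x)
    (hstrong : ∀ x z, m * (x - z) ^ 2 ≤ (f' x - f' z) * (x - z))
    (hlip : ∀ x z, |f' x - f' z| ≤ L * |x - z|)
    (hmin : ∀ x, f θstar ≤ f x)
    (θ : Fin p → ℝ)
    {Ω : Type*} [MeasurableSpace Ω] (μ : Measure Ω) [IsProbabilityMeasure μ]
    (ξ : Fin p → Ω → ℝ)
    (hmeas : ∀ i, Measurable (ξ i))
    (hint : ∀ i, Integrable (ξ i) μ)
    (hint2 : ∀ i, Integrable (fun ω => ξ i ω ^ 2) μ)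
    (hmean : ∀ i, ∫ ω, ξ i ω ∂μ = 0)
    (hvar : ∀ i, ∫ ω, ξ i ω ^ 2 ∂μ ≤ σ ^ 2)
    (θ' : (Fin p → Fin p) → Ω → Fin p → ℝ)
    (hθ' : ∀ j ω i, θ' j ω i =
      (1 / 2) * (θ i + θ (j i)) -
        α * (f' ((1 / 2) * (θ i + θ (j i))) + ξ i ω)) :
    ((p : ℝ) ^ p)⁻¹ * ∑ j : Fin p → Fin p, ∫ ω, ∑ i, (θ' j ω i - θstar) ^ 2 ∂μ ≤
      (1 - 2 * α * (m * L / (m + L))) * ∑ i, (θ i - θstar) ^ 2 +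
        α ^ 2 * p * σ ^ 2 := by
  have hz : f' θstar = 0 :=
    IsLocalMin.hasDerivAt_eq_zero (.of_forall hmin) (hderiv θstar)
  have hξ i : MemLp (ξ i) 2 μ := (memLp_two_iff_integrable_sq (hint i).1).2 (hint2 i)
  simpa [hθ', noisyGradientStep, midpoint_eq_smul_add, Fintype.expect_eq_sum_div_card,
    div_eq_inv_mul] using stmt_2_general (by linarith) hα.le hα2
      (isStronglyCocoercive_of_stronglyMonotone_of_lipschitz hstrong hlip) hz θ hξ hmean
      (by simpa using hvar)
end

section
/- Let p ≥ 1, 0 < β < 1, and let I and J be independent indices drawn uniformly from {1, …, p}. Define the random p × p matrix D = Id + β e_I (e_J − e_I)ᵀ, where eᵢ is the i-th standard basis vector of ℝᵖ. Then E[Dᵀ D] = (1 − 2β(1−β)/p) Id + (2β(1−β)/p²) 𝟙 𝟙ᵀ. -/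
open Matrix BigOperators

/-!
The cross terms of `Dᵀ D` are `β e_I vᵀ`, `β v e_Iᵀ` and `β² v vᵀ`, where `v = e_J − e_I`.
Summed over all pairs `(I, J)`, the three outer products give `−S`, `−S` and `2 S` with the same
matrix `S = p Id − 𝟙𝟙ᵀ`: by bilinearity `∑ e_I vᵀ = −S`, and `∑ v vᵀ = 2 S` because exchanging
`I` and `J` changes the sign of `v`. Hence `∑ Dᵀ D = p² Id − 2 β (1 − β) S`.
-/

section BilinMap

variable {R M N ι : Type*} [CommRing R] [AddCommGroup M] [Module R M] [AddCommGroup N] [Module R N]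
  [Fintype ι]

lemma sum_sum_bilinMap_self_sub (B : LinearMap.BilinMap R M N) (x : ι → M) :
    ∑ i, ∑ j, B (x i) (x j - x i) =
      -(Fintype.card ι • ∑ i, B (x i) (x i) - B (∑ i, x i) (∑ i, x i)) := by
  simp only [map_sub, map_sum, LinearMap.sum_apply, Finset.sum_sub_distrib, Finset.sum_const,
    Finset.card_univ, Finset.smul_sum, neg_sub]
  rw [Finset.sum_comm]

lemma sum_sum_bilinMap_sub_self (B : LinearMap.BilinMap R M N) (x : ι → M) :
    ∑ i, ∑ j, B (x j - x i) (x i) =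
      -(Fintype.card ι • ∑ i, B (x i) (x i) - B (∑ i, x i) (∑ i, x i)) :=
  sum_sum_bilinMap_self_sub B.flip x

lemma sum_sum_bilinMap_sub_sub (B : LinearMap.BilinMap R M N) (x : ι → M) :
    ∑ i, ∑ j, B (x j - x i) (x j - x i) =
      2 • (Fintype.card ι • ∑ i, B (x i) (x i) - B (∑ i, x i) (∑ i, x i)) := by
  have exchange : ∑ i, ∑ j, B (x j) (x j - x i) = -∑ i, ∑ j, B (x i) (x j - x i) := by
    rw [Finset.sum_comm]
    simp only [← Finset.sum_neg_distrib, ← map_neg, neg_sub]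
  calc ∑ i, ∑ j, B (x j - x i) (x j - x i)
      = ∑ i, ∑ j, B (x j) (x j - x i) - ∑ i, ∑ j, B (x i) (x j - x i) := by
        simp only [LinearMap.map_sub₂, Finset.sum_sub_distrib]
    _ = 2 • (Fintype.card ι • ∑ i, B (x i) (x i) - B (∑ i, x i) (∑ i, x i)) := by
        rw [exchange, sum_sum_bilinMap_self_sub]
        abel

end BilinMap

lemma transpose_one_add_vecMulVec_mul_self {R ι : Type*} [CommSemiring R] [Fintype ι]
    [DecidableEq ι] (u w : ι → R) :
    (1 + vecMulVec u w)ᵀ * (1 + vecMulVec u w) =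
      1 + (vecMulVec u w + vecMulVec w u) + (u ⬝ᵥ u) • vecMulVec w w := by
  simp only [transpose_add, transpose_one, transpose_vecMulVec, add_mul, mul_add, one_mul, mul_one,
    vecMulVec_mul_vecMulVec, vecMulVec_smul]
  abel

lemma sum_vecMulVec_single_self {R ι : Type*} [NonAssocSemiring R] [Fintype ι] [DecidableEq ι] :
    ∑ i : ι, vecMulVec (Pi.single i (1 : R)) (Pi.single i (1 : R)) = 1 := by
  simp only [← single_eq_single_vecMulVec_single, sum_single_one]

section PullGossip

variable {R ι : Type*} [CommRing R] [DecidableEq ι]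

/-- The update matrix `Id + β eᵢ (eⱼ − eᵢ)ᵀ` of the pull-gossip step with mixing parameter `β` in
which processor `i` pulls from processor `j`. -/
def pullGossip (β : R) (i j : ι) : Matrix ι ι R :=
  1 + β • vecMulVec (Pi.single i 1) (Pi.single j 1 - Pi.single i 1)

variable [Fintype ι]

lemma transpose_pullGossip_mul_self (β : R) (i j : ι) :
    (pullGossip β i j)ᵀ * pullGossip β i j =
      1 + β • (vecMulVec (Pi.single i 1) (Pi.single j 1 - Pi.single i 1) +
          vecMulVec (Pi.single j 1 - Pi.single i 1) (Pi.single i 1)) +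
        β ^ 2 • vecMulVec (Pi.single j 1 - Pi.single i 1) (Pi.single j 1 - Pi.single i 1) := by
  rw [pullGossip, ← vecMulVec_smul, transpose_one_add_vecMulVec_mul_self, single_one_dotProduct,
    Pi.single_eq_same]
  simp only [vecMulVec_smul, smul_vecMulVec, smul_add, smul_smul, one_mul, pow_two]

lemma sum_transpose_pullGossip_mul_self (β : R) :
    ∑ i : ι, ∑ j, (pullGossip β i j)ᵀ * pullGossip β i j =
      (Fintype.card ι : R) ^ 2 • 1 -
        (2 * β * (1 - β)) • ((Fintype.card ι : R) • 1 - vecMulVec 1 1) := by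
  let B : LinearMap.BilinMap R (ι → R) (Matrix ι ι R) := vecMulVecBilin R R
  let e (i : ι) : ι → R := Pi.single i 1
  let S : Matrix ι ι R := (Fintype.card ι : R) • 1 - vecMulVec 1 1
  have scatter_eq : Fintype.card ι • ∑ i, B (e i) (e i) - B (∑ i, e i) (∑ i, e i) = S := by
    have sum_e : ∑ i, e i = 1 := Finset.univ_sum_single 1
    have sum_B_e : ∑ i, B (e i) (e i) = 1 := sum_vecMulVec_single_self
    rw [sum_e, sum_B_e, ← Nat.cast_smul_eq_nsmul R]
    rfl
  have sum_one : ∑ _i : ι, ∑ _j : ι, (1 : Matrix ι ι R) = (Fintype.card ι : R) ^ 2 • 1 := by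
    simp only [Finset.sum_const, Finset.card_univ, ← Nat.cast_smul_eq_nsmul R, smul_smul, pow_two]
  calc ∑ i : ι, ∑ j, (pullGossip β i j)ᵀ * pullGossip β i j
      = ∑ i, ∑ j, (1 + β • (B (e i) (e j - e i) + B (e j - e i) (e i)) +
          β ^ 2 • B (e j - e i) (e j - e i)) := by
        simp only [transpose_pullGossip_mul_self]
        rfl
    _ = (Fintype.card ι : R) ^ 2 • 1 + β • (-S + -S) + β ^ 2 • (2 • S) := by
        simp only [Finset.sum_add_distrib, ← Finset.smul_sum, sum_sum_bilinMap_self_sub,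
          sum_sum_bilinMap_sub_self, sum_sum_bilinMap_sub_sub, scatter_eq, sum_one]
    _ = (Fintype.card ι : R) ^ 2 • 1 - (2 * β * (1 - β)) • S := by module

end PullGossip

theorem stmt_4_general {K ι : Type*} [Field K] [Fintype ι] [DecidableEq ι]
    (hι : (Fintype.card ι : K) ≠ 0) (β : K) :
    ((Fintype.card ι : K) ^ 2)⁻¹ • ∑ q : ι × ι, (pullGossip β q.1 q.2)ᵀ * pullGossip β q.1 q.2 =
      (1 - 2 * β * (1 - β) / Fintype.card ι) • (1 : Matrix ι ι K) +
        (2 * β * (1 - β) / (Fintype.card ι : K) ^ 2) • vecMulVec 1 1 := by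
  rw [Fintype.sum_prod_type, sum_transpose_pullGossip_mul_self]
  match_scalars <;> field_simp

/-- Second moment of the asynchronous pull-gossip update matrix
`D = I + β e_I (e_J − e_I)ᵀ` with `I, J` independent uniform on `{1, …, p}`
(modeled by averaging over all `p²` equally likely pairs):
`E[Dᵀ D] = (1 − 2β(1−β)/p) I + (2β(1−β)/p²) 𝟙 𝟙ᵀ`. -/
theorem stmt_4 (p : ℕ) (hp : 1 ≤ p) (β : ℝ) (hβ0 : 0 < β) (hβ1 : β < 1)
    (D : Fin p × Fin p → Matrix (Fin p) (Fin p) ℝ)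
    (hD : ∀ q : Fin p × Fin p,
      D q = 1 + β • vecMulVec (Pi.single q.1 1)
        (Pi.single q.2 1 - Pi.single q.1 1)) :
    ((p : ℝ) ^ 2)⁻¹ • ∑ q : Fin p × Fin p, (D q)ᵀ * D q =
      (1 - 2 * β * (1 - β) / p) • (1 : Matrix (Fin p) (Fin p) ℝ) +
        (2 * β * (1 - β) / p ^ 2) • vecMulVec (fun _ => (1 : ℝ)) (fun _ => (1 : ℝ)) := by
  obtain rfl : D = fun q => pullGossip β q.1 q.2 := funext hD
  have hcard : (Fintype.card (Fin p) : ℝ) ≠ 0 := by simpa using Nat.one_le_iff_ne_zero.mp hp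
  simpa only [Fintype.card_fin, Pi.one_def] using stmt_4_general hcard β
end

section
/- Let p ≥ 1, 0 < β < 1, and let I and J be independent indices drawn uniformly from {1, …, p}. Define the random p × p matrix D = Id + β e_I (e_J − e_I)ᵀ. Then E[Dᵀ 𝟙 𝟙ᵀ D] = (2β²/p) Id + (1 − 2β²/p²) 𝟙 𝟙ᵀ. -/
open Matrix BigOperators

/-! Since `𝟙ᵀ D = (𝟙 + β (e_J - e_I))ᵀ`, the matrix `Dᵀ 𝟙 𝟙ᵀ D` is the outer square of
`𝟙 + β (e_J - e_I)`. The increment `e_J - e_I` is centred because `I` and `J` have the same law,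
so the cross terms average to zero. What remains is `𝟙 𝟙ᵀ` plus `β²` times the covariance of a
difference of two independent copies, i.e. twice the covariance
`E[e_I e_Iᵀ] - E[e_I] E[e_I]ᵀ = p⁻¹ Id - p⁻² 𝟙 𝟙ᵀ`. -/

section PairwiseDifferences

lemma sum_prod_snd_sub_fst {ι M : Type*} [Fintype ι] [AddCommGroup M] (x : ι → M) :
    ∑ q : ι × ι, (x q.2 - x q.1) = 0 := by
  rw [Finset.sum_sub_distrib, Fintype.sum_prod_type_right, Fintype.sum_prod_type, sub_self]

variable {ι R M N P : Type*} [CommSemiring R] [AddCommGroup M] [AddCommGroup N] [AddCommGroup P]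
  [Module R M] [Module R N] [Module R P]

lemma sum_bilin_add_add_of_sum_eq_zero (B : M →ₗ[R] N →ₗ[R] P) (s : Finset ι) (a : M) (b : N)
    {x : ι → M} {y : ι → N} (hx : ∑ i ∈ s, x i = 0) (hy : ∑ i ∈ s, y i = 0) :
    ∑ i ∈ s, B (a + x i) (b + y i) = s.card • B a b + ∑ i ∈ s, B (x i) (y i) := by
  have left_cross : ∑ i ∈ s, B a (y i) = 0 := by rw [← map_sum, hy, map_zero]
  have right_cross : ∑ i ∈ s, B (x i) b = 0 := by
    rw [← LinearMap.sum_apply, ← map_sum, hx, map_zero, LinearMap.zero_apply]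
  simp only [map_add, LinearMap.add_apply, Finset.sum_add_distrib, Finset.sum_const, left_cross,
    right_cross, add_zero, zero_add]

lemma sum_prod_bilin_sub_sub [Fintype ι] (B : M →ₗ[R] N →ₗ[R] P) (x : ι → M) (y : ι → N) :
    ∑ q : ι × ι, B (x q.2 - x q.1) (y q.2 - y q.1) =
      2 • (Fintype.card ι • ∑ i, B (x i) (y i) - B (∑ i, x i) (∑ i, y i)) := by
  have expand (i j : ι) : B (x j - x i) (y j - y i) =
      B (x j) (y j) + B (x i) (y i) - (B (x j) (y i) + B (x i) (y j)) := by
    simp only [map_sub, LinearMap.sub_apply]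
    abel
  have off_diagonal : ∑ i, ∑ j, B (x i) (y j) = B (∑ i, x i) (∑ j, y j) := by
    simp only [map_sum, LinearMap.sum_apply]
    exact Finset.sum_comm
  have off_diagonal_swap : ∑ i, ∑ j, B (x j) (y i) = B (∑ i, x i) (∑ j, y j) := by
    rw [Finset.sum_comm, off_diagonal]
  simp only [Fintype.sum_prod_type, expand, Finset.sum_sub_distrib, Finset.sum_add_distrib,
    off_diagonal, off_diagonal_swap, Finset.sum_const, Finset.card_univ, ← Finset.smul_sum]
  rw [← two_nsmul, ← two_nsmul, ← smul_sub]

end PairwiseDifferences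

section OuterProduct

lemma transpose_mul_vecMulVec_mul {l m n o R : Type*} [Fintype m] [Fintype n] [CommSemiring R]
    (A : Matrix m l R) (u : m → R) (v : n → R) (B : Matrix n o R) :
    Aᵀ * vecMulVec u v * B = vecMulVec (u ᵥ* A) (v ᵥ* B) := by
  rw [mul_vecMulVec, vecMulVec_mul, mulVec_transpose]

lemma sum_vecMulVec_single_one {ι R : Type*} [Fintype ι] [DecidableEq ι] [NonAssocSemiring R] :
    ∑ i : ι, vecMulVec (Pi.single i (1 : R)) (Pi.single i 1) = 1 := by
  simp only [← single_eq_single_vecMulVec_single, sum_single_eq_diagonal, diagonal_one]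

end OuterProduct

section Gossip

variable {ι R : Type*} [DecidableEq ι]

/-- The update matrix of one step of pull-gossip with mixing parameter `β`, in which processor `i`
mixes in the value of processor `j`: the value of `D = Id + β e_I (e_J - e_I)ᵀ` on the event
`I = i`, `J = j`. -/
def gossipMatrix [Ring R] (β : R) (i j : ι) : Matrix ι ι R :=
  1 + β • vecMulVec (Pi.single i 1) (Pi.single j 1 - Pi.single i 1)

variable [Fintype ι]

lemma one_vecMul_gossipMatrix [CommRing R] (β : R) (i j : ι) :
    1 ᵥ* gossipMatrix β i j = 1 + β • (Pi.single j 1 - Pi.single i 1) := by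
  rw [gossipMatrix, vecMul_add, vecMul_one, vecMul_smul, vecMul_vecMulVec, dotProduct_single_one,
    Pi.one_apply, one_smul]

lemma sum_vecMulVec_single_sub_single [CommRing R] :
    ∑ q : ι × ι, vecMulVec (Pi.single q.2 1 - Pi.single q.1 1 : ι → R)
        (Pi.single q.2 1 - Pi.single q.1 1) =
      2 • (Fintype.card ι • (1 : Matrix ι ι R) - vecMulVec 1 1) := by
  have sum_single : ∑ i, (Pi.single i 1 : ι → R) = 1 := Finset.univ_sum_single 1
  simpa only [vecMulVecBilin_apply_apply, sum_vecMulVec_single_one, sum_single] using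
    sum_prod_bilin_sub_sub (vecMulVecBilin R R) (fun i : ι ↦ (Pi.single i 1 : ι → R))
      (fun i ↦ Pi.single i 1)

lemma sum_gossipMatrix_transpose_mul_ones_mul [CommRing R] (β : R) :
    ∑ q : ι × ι, (gossipMatrix β q.1 q.2)ᵀ * vecMulVec 1 1 * gossipMatrix β q.1 q.2 =
      (2 * β ^ 2 * Fintype.card ι) • (1 : Matrix ι ι R) +
        ((Fintype.card ι : R) ^ 2 - 2 * β ^ 2) • vecMulVec 1 1 := by
  let d (q : ι × ι) : ι → R := Pi.single q.2 1 - Pi.single q.1 1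
  have centred : ∑ q, β • d q = 0 := by
    rw [← Finset.smul_sum, sum_prod_snd_sub_fst (fun i ↦ (Pi.single i 1 : ι → R)), smul_zero]
  calc ∑ q : ι × ι, (gossipMatrix β q.1 q.2)ᵀ * vecMulVec 1 1 * gossipMatrix β q.1 q.2
    _ = ∑ q, vecMulVec (1 + β • d q) (1 + β • d q) := by
      simp only [transpose_mul_vecMulVec_mul, one_vecMul_gossipMatrix, d]
    _ = Fintype.card (ι × ι) • vecMulVec 1 1 + ∑ q, vecMulVec (β • d q) (β • d q) :=
      sum_bilin_add_add_of_sum_eq_zero (vecMulVecBilin R R) Finset.univ 1 1 centred centred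
    _ = Fintype.card (ι × ι) • vecMulVec 1 1 +
          β ^ 2 • 2 • (Fintype.card ι • (1 : Matrix ι ι R) - vecMulVec 1 1) := by
      simp only [smul_vecMulVec, vecMulVec_smul, smul_smul, ← pow_two, ← Finset.smul_sum, d,
        sum_vecMulVec_single_sub_single]
    _ = _ := by
      rw [Fintype.card_prod]
      module

end Gossip

theorem stmt_5_general {ι K : Type*} [Fintype ι] [DecidableEq ι] [Field K]
    (hι : (Fintype.card ι : K) ≠ 0) (β : K) :
    ((Fintype.card ι : K) ^ 2)⁻¹ • ∑ q : ι × ι,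
        (gossipMatrix β q.1 q.2)ᵀ * vecMulVec 1 1 * gossipMatrix β q.1 q.2 =
      (2 * β ^ 2 / Fintype.card ι) • (1 : Matrix ι ι K) +
        (1 - 2 * β ^ 2 / (Fintype.card ι : K) ^ 2) • vecMulVec 1 1 := by
  rw [sum_gossipMatrix_transpose_mul_ones_mul, smul_add, smul_smul, smul_smul]
  congr 2 <;> field_simp

/-- For the asynchronous pull-gossip update matrix `D = I + β e_I (e_J − e_I)ᵀ`
with `I, J` independent uniform on `{1, …, p}` (modeled by averaging over all
`p²` equally likely pairs):
`E[Dᵀ 𝟙 𝟙ᵀ D] = (2β²/p) I + (1 − 2β²/p²) 𝟙 𝟙ᵀ`. -/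
theorem stmt_5 (p : ℕ) (hp : 1 ≤ p) (β : ℝ) (hβ0 : 0 < β) (hβ1 : β < 1)
    (D : Fin p × Fin p → Matrix (Fin p) (Fin p) ℝ)
    (hD : ∀ q : Fin p × Fin p,
      D q = 1 + β • vecMulVec (Pi.single q.1 1)
        (Pi.single q.2 1 - Pi.single q.1 1)) :
    ((p : ℝ) ^ 2)⁻¹ • ∑ q : Fin p × Fin p,
        (D q)ᵀ * vecMulVec (fun _ => (1 : ℝ)) (fun _ => (1 : ℝ)) * D q =
      (2 * β ^ 2 / p) • (1 : Matrix (Fin p) (Fin p) ℝ) +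
        (1 - 2 * β ^ 2 / p ^ 2) • vecMulVec (fun _ => (1 : ℝ)) (fun _ => (1 : ℝ)) := by
  obtain rfl : D = fun q ↦ gossipMatrix β q.1 q.2 := funext hD
  have card_ne_zero : (Fintype.card (Fin p) : ℝ) ≠ 0 := by
    rw [Fintype.card_fin]
    positivity
  simpa only [Fintype.card_fin] using! stmt_5_general card_ne_zero β
end
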